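/- Let S be a nonempty finite type and let P be a row-stochastic matrix indexed by S (all entries nonnegative and each row summing to 1) that is irreducible (for all i, j : S there exists t ≥ 1 with (P^t) i j > 0) and aperiodic (for every i : S the greatest common divisor of {t ≥ 1 : (P^t) i i > 0} equals 1), and let μ : S → ℝ be its stationary distribution (μ nonnegative, summing to 1, with μ P = μ). Then there exist constants α ∈ (0, 1) and C > 0 such that for every t ∈ ℕ and every i : S, (1/2) * ∑ j, |(P^t) i j − μ j| ≤ C * α^t. -/

import Mathlib

/-!
Only one state `k` matters: it is aperiodic and reachable from everywhere. Its return times form an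
additive submonoid of `ℕ` with gcd `1`, which contains all large integers, so some power `P ^ N` has
a positive `k`-th column, say with all entries at least `δ > 0`. Subtracting `δ` from that column
does not change the action of `P ^ N` on row vectors of sum zero and leaves a nonnegative matrix
with row sums `1 - δ`; hence `P ^ N` contracts the `ℓ¹` norm of such vectors by the factor `1 - δ`
(Doeblin's argument). Finally, row `i` of `P ^ t` minus `μ` is `(e_i - μ) P ^ t`, where `e_i` is the
`i`-th unit vector, and `e_i - μ` has sum zero.
-/

open Filter Matrix

lemma eventually_mem_of_setGcd_eq_one {T : AddSubmonoid ℕ} (hT : Nat.setGcd (T : Set ℕ) = 1) :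
    ∀ᶠ m in atTop, m ∈ T := by
  obtain ⟨n, hn⟩ := Nat.exists_mem_closure_of_ge (T : Set ℕ)
  filter_upwards [eventually_ge_atTop n] with m hm
  simpa using hn m hm (by simp [hT])

section ReturnTimes

variable {R S : Type*} [Semiring R] [PartialOrder R] [IsStrictOrderedRing R]
  [Fintype S] [DecidableEq S] {P : Matrix S S R}

lemma pow_add_apply_pos (hP : ∀ i j, 0 ≤ P i j) {s t : ℕ} {i k j : S}
    (hs : 0 < (P ^ s) i k) (ht : 0 < (P ^ t) k j) : 0 < (P ^ (s + t)) i j := by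
  rw [pow_add, mul_apply]
  exact Finset.sum_pos' (fun l _ ↦ mul_nonneg (pow_apply_nonneg hP s i l)
    (pow_apply_nonneg hP t l j)) ⟨k, Finset.mem_univ k, mul_pos hs ht⟩

/-- The lengths of the closed walks at `k` in the graph of positive entries of `P`. Length `0` is
included, so that these form a submonoid; this does not affect their gcd, the period of `k`. -/
def returnTimes (hP : ∀ i j, 0 ≤ P i j) (k : S) : AddSubmonoid ℕ where
  carrier := {t | 0 < (P ^ t) k k}
  zero_mem' := by simp
  add_mem' := pow_add_apply_pos hP

lemma eventually_forall_pow_apply_pos (hP : ∀ i j, 0 ≤ P i j) {k : S}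
    (hreach : ∀ i, ∃ t, 0 < (P ^ t) i k)
    (haper : Nat.setGcd (returnTimes hP k : Set ℕ) = 1) :
    ∀ᶠ m in atTop, ∀ i, 0 < (P ^ m) i k := by
  refine eventually_all.2 fun i ↦ ?_
  obtain ⟨t, ht⟩ := hreach i
  have hreturn : ∀ᶠ m in atTop, 0 < (P ^ m) k k := eventually_mem_of_setGcd_eq_one haper
  filter_upwards [(tendsto_sub_atTop_nat t).eventually hreturn, eventually_ge_atTop t] with m hm htm
  simpa [htm] using pow_add_apply_pos hP ht hm

end ReturnTimes

lemma sum_vecMul_of_row_sum_eq_one {R m n : Type*} [Fintype m] [Fintype n] [NonAssocSemiring R]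
    {Q : Matrix m n R} (hQ : ∀ i, ∑ j, Q i j = 1) (x : m → R) :
    ∑ j, (x ᵥ* Q) j = ∑ i, x i := by
  simp only [vecMul, dotProduct]
  rw [Finset.sum_comm]
  simp only [← Finset.mul_sum, hQ, mul_one]

lemma vecMul_sub_replicateRow_of_sum_eq_zero {R m n : Type*} [Fintype m] [NonUnitalNonAssocRing R]
    (Q : Matrix m n R) (ν : n → R) {x : m → R} (hx : ∑ i, x i = 0) :
    x ᵥ* (Q - replicateRow m ν) = x ᵥ* Q := by
  ext j
  simp [vecMul, dotProduct, mul_sub, ← Finset.sum_mul, hx]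

section Contraction

variable {R m n : Type*} [Fintype m] [Fintype n] [CommRing R] [LinearOrder R] [IsOrderedRing R]
  {Q : Matrix m n R}

lemma sum_abs_vecMul_le_of_row_sum_eq {r : R} (hQ : ∀ i j, 0 ≤ Q i j) (hr : ∀ i, ∑ j, Q i j = r)
    (x : m → R) : ∑ j, |(x ᵥ* Q) j| ≤ r * ∑ i, |x i| :=
  calc ∑ j, |(x ᵥ* Q) j| ≤ ∑ j, ∑ i, |x i| * Q i j := by
        refine Finset.sum_le_sum fun j _ ↦ ?_
        refine (Finset.abs_sum_le_sum_abs _ _).trans_eq (Finset.sum_congr rfl fun i _ ↦ ?_)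
        rw [abs_mul, abs_of_nonneg (hQ i j)]
    _ = ∑ i, |x i| * r := by
        rw [Finset.sum_comm]
        simp only [← Finset.mul_sum, hr]
    _ = r * ∑ i, |x i| := by rw [← Finset.sum_mul, mul_comm]

lemma sum_abs_vecMul_le_of_le {ν : n → R} (hν : ∀ i j, ν j ≤ Q i j) (hQ : ∀ i, ∑ j, Q i j = 1)
    {x : m → R} (hx : ∑ i, x i = 0) : ∑ j, |(x ᵥ* Q) j| ≤ (1 - ∑ j, ν j) * ∑ i, |x i| := by
  rw [← vecMul_sub_replicateRow_of_sum_eq_zero Q ν hx]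
  exact sum_abs_vecMul_le_of_row_sum_eq (fun i j ↦ sub_nonneg.2 (hν i j)) (by simp [hQ]) x

end Contraction

lemma sum_abs_vecMul_le_of_le_col {R S : Type*} [Fintype S] [DecidableEq S] [CommRing R]
    [LinearOrder R] [IsOrderedRing R] {Q : Matrix S S R} (hQ : Q ∈ rowStochastic R S) {k : S}
    {δ : R} (hδ : ∀ i, δ ≤ Q i k) {x : S → R} (hx : ∑ i, x i = 0) :
    ∑ j, |(x ᵥ* Q) j| ≤ (1 - δ) * ∑ i, |x i| := by
  have single_le (i j : S) : (Pi.single k δ : S → R) j ≤ Q i j := by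
    obtain rfl | hj := eq_or_ne j k
    · simpa using hδ i
    · simpa [hj] using nonneg_of_mem_rowStochastic hQ
  simpa using sum_abs_vecMul_le_of_le single_le (sum_row_of_mem_rowStochastic hQ) hx

lemma le_mul_pow_of_antitone_of_add_le {K : Type*} [Field K] [LinearOrder K]
    [IsStrictOrderedRing K] {f : ℕ → K} (hf : Antitone f) (hf₀ : 0 ≤ f 0) {α : K} (hα₀ : 0 < α)
    (hα₁ : α ≤ 1) {N : ℕ} (hN : N ≠ 0) (hstep : ∀ t, f (t + N) ≤ α ^ N * f t) (t : ℕ) :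
    f t ≤ (α ^ N)⁻¹ * α ^ t * f 0 := by
  induction t using Nat.strong_induction_on with
  | _ t ih =>
    obtain htN | hNt := lt_or_ge t N
    · have one_le : 1 ≤ (α ^ N)⁻¹ * α ^ t := by
        rw [← div_eq_inv_mul, one_le_div (by positivity)]
        exact pow_le_pow_of_le_one hα₀.le hα₁ htN.le
      exact (hf t.zero_le).trans (le_mul_of_one_le_left hf₀ one_le)
    · obtain ⟨s, rfl⟩ := Nat.exists_eq_add_of_le' hNt
      calc f (s + N) ≤ α ^ N * f s := hstep s
        _ ≤ α ^ N * ((α ^ N)⁻¹ * α ^ s * f 0) := by gcongr; exact ih s (by lia)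
        _ = (α ^ N)⁻¹ * α ^ (s + N) * f 0 := by ring

lemma vecMul_pow_eq_self {R S : Type*} [Semiring R] [Fintype S] [DecidableEq S]
    {P : Matrix S S R} {μ : S → R} (hμ : μ ᵥ* P = μ) (t : ℕ) : μ ᵥ* P ^ t = μ := by
  induction t with
  | zero => simp
  | succ t ih => rw [pow_succ, ← vecMul_vecMul, ih, hμ]

section Convergence

variable {S : Type*} [Fintype S] [DecidableEq S] {P : Matrix S S ℝ}

lemma exists_sum_abs_vecMul_pow_le (hP : P ∈ rowStochastic ℝ S) {k : S} {N : ℕ} (hN : N ≠ 0)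
    (hcol : ∀ i, 0 < (P ^ N) i k) :
    ∃ α C : ℝ, α ∈ Set.Ioo (0 : ℝ) 1 ∧ 0 < C ∧ ∀ x : S → ℝ, ∑ i, x i = 0 → ∀ t : ℕ,
      ∑ j, |(x ᵥ* P ^ t) j| ≤ C * α ^ t * ∑ i, |x i| := by
  obtain ⟨δ, hδ₀, hδ₁, hδ⟩ : ∃ δ : ℝ, 0 < δ ∧ δ < 1 ∧ ∀ i, δ < (P ^ N) i k := by
    simpa using Set.Finite.exists_between (Set.finite_singleton (0 : ℝ)) (by simp)
      ((Set.finite_range fun i ↦ (P ^ N) i k).insert 1) (by simp) (by simpa using hcol)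
  have hβ : 0 < 1 - δ := sub_pos.2 hδ₁
  let α : ℝ := (1 - δ) ^ (N : ℝ)⁻¹
  have hα₀ : 0 < α := Real.rpow_pos_of_pos hβ _
  have hα₁ : α < 1 := Real.rpow_lt_one hβ.le (by linarith) (by positivity)
  have hαN : α ^ N = 1 - δ := Real.rpow_inv_natCast_pow hβ.le hN
  refine ⟨α, (α ^ N)⁻¹, ⟨hα₀, hα₁⟩, by positivity, fun x hx t ↦ ?_⟩
  have sum_eq_zero (t : ℕ) : ∑ j, (x ᵥ* P ^ t) j = 0 := by
    rw [sum_vecMul_of_row_sum_eq_one (sum_row_of_mem_rowStochastic (pow_mem hP t)), hx]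
  have antitone : Antitone fun t ↦ ∑ j, |(x ᵥ* P ^ t) j| := antitone_nat_of_succ_le fun t ↦ by
    simpa only [pow_succ, vecMul_vecMul, one_mul] using
      sum_abs_vecMul_le_of_row_sum_eq hP.1 (sum_row_of_mem_rowStochastic hP) (x ᵥ* P ^ t)
  have contract (t : ℕ) : ∑ j, |(x ᵥ* P ^ (t + N)) j| ≤ α ^ N * ∑ j, |(x ᵥ* P ^ t) j| := by
    simpa only [hαN, pow_add, vecMul_vecMul] using
      sum_abs_vecMul_le_of_le_col (pow_mem hP N) (fun i ↦ (hδ i).le) (sum_eq_zero t)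
  simpa using le_mul_pow_of_antitone_of_add_le antitone (by positivity) hα₀ hα₁.le hN contract t

theorem convergence_theorem_general (hP : P ∈ rowStochastic ℝ S) {k : S}
    (hreach : ∀ i, ∃ t, 0 < (P ^ t) i k) (haper : Nat.setGcd {t | 0 < (P ^ t) k k} = 1)
    {μ : S → ℝ} (hμsum : ∑ i, μ i = 1) (hμstat : μ ᵥ* P = μ) :
    ∃ α C : ℝ, α ∈ Set.Ioo (0 : ℝ) 1 ∧ 0 < C ∧
      ∀ t : ℕ, ∀ i : S, (1 / 2) * ∑ j, |(P ^ t) i j - μ j| ≤ C * α ^ t := by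
  obtain ⟨N, hcol, hN⟩ :=
    ((eventually_forall_pow_apply_pos hP.1 hreach haper).and (eventually_ne_atTop 0)).exists
  obtain ⟨α, C, hα, hC, decay⟩ := exists_sum_abs_vecMul_pow_le hP hN hcol
  refine ⟨α, 1 / 2 * (C * (1 + ∑ j, |μ j|)), hα, by positivity, fun t i ↦ ?_⟩
  let x : S → ℝ := Pi.single i 1 - μ
  have hx : ∑ j, x j = 0 := by simp [x, hμsum]
  have x_vecMul (j : S) : (x ᵥ* P ^ t) j = (P ^ t) i j - μ j := by
    simp [x, sub_vecMul, vecMul_pow_eq_self hμstat]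
  have sum_abs_x : ∑ j, |x j| ≤ 1 + ∑ j, |μ j| := calc
    ∑ j, |x j| ≤ ∑ j, (|(Pi.single i 1 : S → ℝ) j| + |μ j|) :=
      Finset.sum_le_sum fun j _ ↦ abs_sub _ _
    _ = 1 + ∑ j, |μ j| := by simp [Finset.sum_add_distrib, Pi.single_apply, apply_ite]
  calc 1 / 2 * ∑ j, |(P ^ t) i j - μ j| = 1 / 2 * ∑ j, |(x ᵥ* P ^ t) j| := by simp only [x_vecMul]
    _ ≤ 1 / 2 * (C * α ^ t * (1 + ∑ j, |μ j|)) := by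
      have := hα.1
      grw [decay x hx t, sum_abs_x]
    _ = 1 / 2 * (C * (1 + ∑ j, |μ j|)) * α ^ t := by ring

end Convergence

/-- Convergence Theorem: For a row-stochastic, irreducible and
aperiodic matrix `P` over a nonempty finite type with stationary distribution `μ`,
there are constants `α ∈ (0,1)` and `C > 0` such that for every `t` and every
state `i`, the total variation distance between the `i`-th row of `P^t` and `μ`
is at most `C * α^t`. -/
theorem convergence_theorem
    (S : Type*) [Fintype S] [DecidableEq S] [Nonempty S]
    (P : Matrix S S ℝ)
    (hnonneg : ∀ i j, 0 ≤ P i j)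
    (hrow : ∀ i, ∑ j, P i j = 1)
    (hirr : ∀ i j : S, ∃ t : ℕ, 1 ≤ t ∧ 0 < (P ^ t) i j)
    (haper : ∀ i : S, ∀ d : ℕ,
      (∀ t : ℕ, 1 ≤ t → 0 < (P ^ t) i i → d ∣ t) → d = 1)
    (μ : S → ℝ)
    (hμnonneg : ∀ i, 0 ≤ μ i)
    (hμsum : ∑ i, μ i = 1)
    (hμstat : ∀ j, ∑ i, μ i * P i j = μ j) :
    ∃ α C : ℝ, α ∈ Set.Ioo (0 : ℝ) 1 ∧ 0 < C ∧
      ∀ t : ℕ, ∀ i : S,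
        (1 / 2) * ∑ j, |(P ^ t) i j - μ j| ≤ C * α ^ t := by
  exact convergence_theorem_general (mem_rowStochastic_iff_sum.2 ⟨hnonneg, hrow⟩)
    (fun i ↦ (hirr i (Classical.arbitrary S)).imp fun _ ↦ And.right)
    (haper _ _ fun _ _ ht ↦ Nat.setGcd_dvd_of_mem ht) hμsum (funext hμstat)
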